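/- arXiv:2501.13729 — 2 statements merged into one kernel-verified Lean document; each statement's English description precedes it below -/
import Mathlib

section
/- Let X be a set, let k ≥ 2 be an integer, let T ≥ 0 be a real number, and let Q₁, …, Q_k be finite subsets of X such that #(Q_a ∩ Q_b ∩ Q_c) ≤ T for all indices 1 ≤ a < b < c ≤ k. Then #(Q₁ ∪ ⋯ ∪ Q_k) ≥ Σ_{a=1}^{k} #Q_a − #(⋃_{1≤a<b≤k} (Q_a ∩ Q_b)) − C(k,3)·T, where C(k,3) = k(k−1)(k−2)/6. -/
/-!
Let `m x` be the number of indices `a` with `x ∈ Q a`. Pointwise,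
`m ≤ [1 ≤ m] + [2 ≤ m] + C(m, 3)`, because `m - 2 ≤ C(m, 3)` for `2 ≤ m`. Summing over the union
turns the left side into `∑ #(Q a)` and the first two terms on the right into the cardinalities
of the union and of the union of pairwise intersections. Double counting of pairs
(point, three-element index set) turns the last term into a sum of `C(k, 3)` cardinalities of
triple intersections, each at most `T`.
-/

lemma le_choose_three (n : ℕ) : n ≤ (n + 2).choose 3 := by
  induction n with
  | zero => simp
  | succ n ih =>
    have h1 : (n + 1 + 2).choose 3 = (n + 2).choose 2 + (n + 2).choose 3 := Nat.choose_succ_succ _ _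
    have h2 : 0 < (n + 2).choose 2 := Nat.choose_pos (by omega)
    omega

lemma cast_choose_three (k : ℕ) :
    (k.choose 3 : ℝ) = (k : ℝ) * ((k : ℝ) - 1) * ((k : ℝ) - 2) / 6 := by
  induction k with
  | zero => simp
  | succ n ih =>
    have h1 : (n + 1).choose 3 = n.choose 2 + n.choose 3 := Nat.choose_succ_succ _ _
    rw [h1, Nat.cast_add, ih, Nat.cast_choose_two]
    push_cast
    ring

/-- inclusion–exclusion lower bound for the cardinality of a union of finite
sets whose triple intersections are all of size at most T. -/
theorem statement18 {X : Type*} [DecidableEq X] (k : ℕ) (hk : 2 ≤ k) (T : ℝ) (hT : 0 ≤ T)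
    (Q : Fin k → Finset X)
    (h3 : ∀ a b c : Fin k, a < b → b < c → ((Q a ∩ Q b ∩ Q c).card : ℝ) ≤ T) :
    (∑ a : Fin k, ((Q a).card : ℝ))
      - (((Finset.univ.filter (fun ab : Fin k × Fin k => ab.1 < ab.2)).biUnion
          (fun ab => Q ab.1 ∩ Q ab.2)).card : ℝ)
      - ((k : ℝ) * ((k : ℝ) - 1) * ((k : ℝ) - 2) / 6) * T
    ≤ ((Finset.univ.biUnion Q).card : ℝ) := by
  classical
  set U := Finset.univ.biUnion Q with hU
  set V := (Finset.univ.filter (fun ab : Fin k × Fin k => ab.1 < ab.2)).biUnion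
    (fun ab => Q ab.1 ∩ Q ab.2) with hV
  let S : X → Finset (Fin k) := fun x => Finset.univ.filter (fun a => x ∈ Q a)
  have hVU : V ⊆ U := by
    intro x hx
    simp only [hV, hU, Finset.mem_biUnion, Finset.mem_inter] at hx ⊢
    obtain ⟨ab, -, h, -⟩ := hx
    exact ⟨ab.1, Finset.mem_univ _, h⟩
  have hsum : ∑ a : Fin k, (Q a).card = ∑ x ∈ U, (S x).card := by
    have h := Finset.sum_card_bipartiteAbove_eq_sum_card_bipartiteBelow
      (s := (Finset.univ : Finset (Fin k))) (t := U) (fun a x => x ∈ Q a)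
    refine Eq.trans (Finset.sum_congr rfl fun a _ => ?_) h
    congr 1
    ext x
    simp only [Finset.mem_bipartiteAbove, hU, Finset.mem_biUnion]
    exact ⟨fun h => ⟨⟨a, Finset.mem_univ _, h⟩, h⟩, fun h => h.2⟩
  have hpt : ∀ x ∈ U, (S x).card ≤ 1 + (if x ∈ V then 1 else 0) + (S x).card.choose 3 := by
    intro x _
    by_cases h1 : (S x).card ≤ 1
    · omega
    · have hxV : x ∈ V := by
        obtain ⟨a, ha, b, hb, hab⟩ := Finset.one_lt_card.1 (not_le.1 h1)
        simp only [S, Finset.mem_filter, Finset.mem_univ, true_and] at ha hb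
        simp only [hV, Finset.mem_biUnion, Finset.mem_filter, Finset.mem_univ, true_and,
          Finset.mem_inter]
        rcases lt_or_gt_of_ne hab with h | h
        · exact ⟨(a, b), h, ha, hb⟩
        · exact ⟨(b, a), h, hb, ha⟩
      obtain ⟨n, hn⟩ := Nat.exists_eq_add_of_le' (not_le.1 h1)
      have := le_choose_three n
      simp only [Nat.succ_eq_add_one, Nat.reduceAdd] at hn
      rw [if_pos hxV, hn]
      omega
  have htriple : ∑ x ∈ U, (S x).card.choose 3 =
      ∑ s ∈ Finset.powersetCard 3 (Finset.univ : Finset (Fin k)),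
        (U.filter fun x => ∀ a ∈ s, x ∈ Q a).card := by
    have h := Finset.sum_card_bipartiteAbove_eq_sum_card_bipartiteBelow
      (s := U) (t := Finset.powersetCard 3 (Finset.univ : Finset (Fin k)))
      (fun x s => ∀ a ∈ s, x ∈ Q a)
    refine Eq.trans (Finset.sum_congr rfl fun x _ => ?_) h
    rw [← Finset.card_powersetCard]
    congr 1
    ext s
    simp [Finset.mem_bipartiteAbove, Finset.mem_powersetCard, S, Finset.subset_iff, and_comm]
  have hbound : (∑ x ∈ U, ((S x).card.choose 3 : ℝ)) ≤ (k.choose 3 : ℝ) * T := by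
    rw [← Nat.cast_sum, htriple, Nat.cast_sum]
    refine (Finset.sum_le_card_nsmul _ _ T fun s hs => ?_).trans_eq (by simp)
    have hc := (Finset.mem_powersetCard.1 hs).2
    let e := s.orderEmbOfFin hc
    refine le_trans ?_ (h3 (e 0) (e 1) (e 2) (e.strictMono (by decide)) (e.strictMono (by decide)))
    refine Nat.cast_le.2 (Finset.card_le_card fun x hx => ?_)
    have hx' := (Finset.mem_filter.1 hx).2
    have he : ∀ i, x ∈ Q (e i) := fun i => hx' _ (s.orderEmbOfFin_mem hc i)
    simp [he]
  have hmain : ∑ a : Fin k, (Q a).card ≤ U.card + V.card + ∑ x ∈ U, (S x).card.choose 3 := by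
    rw [hsum]
    refine (Finset.sum_le_sum hpt).trans_eq ?_
    rw [Finset.sum_add_distrib, Finset.sum_add_distrib, ← Finset.card_filter,
      Finset.filter_mem_eq_inter, Finset.inter_eq_right.2 hVU]
    simp
  have hmain' : (∑ a : Fin k, ((Q a).card : ℝ)) ≤
      U.card + V.card + ∑ x ∈ U, ((S x).card.choose 3 : ℝ) := by exact_mod_cast hmain
  rw [← cast_choose_three]
  linarith
end

section
/- Let 𝒜 = (A_i)_{i∈I} be a uniformly hyperbolic finite family in SL₂(ℝ), and let U₁, U₀ ⊆ ℝP¹ be open sets such that the closure of U₁ is contained in U₀, U₀ ≠ ℝP¹, and A_i·(closure of U₀) ⊆ U₀ for every i ∈ I. Then there exists n₀ ∈ ℕ such that for every n ≥ n₀, every word i ∈ Iⁿ, and every unit vector u ∈ ℝ² satisfying (A_i)ᵀ·A_i·u = ‖A_i‖^(−2)·u, the projective point [u] does not belong to U₁. -/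
/-!
Write `det2(x, y)` for the determinant of the matrix with columns `x, y`, and `sq x` for the squared
Euclidean norm, so that `det2(x, y)² / (sq x * sq y)` is the squared sine of the angle between the
lines `[x]` and `[y]`.

By compactness of ℝP¹ the lines in `closure U₁` and those outside `U₀` make an angle bounded below
(`exists_sep`). The hypothesis `Aᵢ · closure U₀ ⊆ U₀` together with `U₀ ≠ ℝP¹` and
`I` nonempty forces `closure U₀`
to omit a nonempty open set, hence there are two independent unit vectors `p, q` with
`[p], [q] ∉ U₀` (`exists_pair`). For a word `w` with product `B`, the set `U₀` is mapped into itself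
by `B`, so the lines spanned by `x = B⁻¹ p` and `y = B⁻¹ q` are not in `U₀`.

If `u` spans the contracting singular direction of `B`, then `det2(u, x) = det2(B u, p)` has absolute
value at most `‖B u‖ = ‖B‖⁻¹`, and the same holds for `y`. Since `det2(x, y) = det2(p, q)` is a fixed
nonzero number, `x` and `y` cannot both be short. So when `‖B‖` is large, `[u]` is close
to a line outside `U₀`, and thus cannot lie in `U₁`. Uniform hyperbolicity is used only to make
`‖B‖` large for all long words.
-/

open MeasureTheory Filter Set Topology

namespace Paper

noncomputable section

abbrev Mat2 : Type := Matrix (Fin 2) (Fin 2) ℝ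
abbrev SL2 : Type := Matrix.SpecialLinearGroup (Fin 2) ℝ

/-- The operator norm on 2×2 real matrices induced by the Euclidean norm on ℝ². -/
def opNorm (M : Mat2) : ℝ := ‖(Matrix.toEuclideanLin M).toContinuousLinearMap‖

/-- The product `A_{i₁} ⋯ A_{i_n}` of the matrices along a word `w = (i₁, …, i_n)`. -/
def wordProd {ι : Type*} (A : ι → SL2) (w : List ι) : SL2 := (w.map A).prod

/-- The product `p_{i₁} ⋯ p_{i_n}` of the weights along a word `w = (i₁, …, i_n)`. -/
def wordWeight {ι : Type*} (p : ι → ℝ) (w : List ι) : ℝ := (w.map p).prod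

/-- A finite family in SL₂(ℝ) is uniformly hyperbolic if `‖A_i‖ ≥ c rⁿ` for all words of
length `n ≥ 1`. -/
def UniformlyHyperbolic {ι : Type*} (A : ι → SL2) : Prop :=
  ∃ c > (0:ℝ), ∃ r > (1:ℝ), ∀ w : List ι, w ≠ [] →
    c * r ^ w.length ≤ opNorm (wordProd A w : Mat2)

/-- Strongly Diophantine: distinct words of the same length give matrices that are
exponentially separated. -/
def StronglyDiophantine {ι : Type*} (A : ι → SL2) : Prop :=
  ∃ c ∈ Set.Ioo (0:ℝ) 1, ∀ w w' : List ι, w ≠ [] → w.length = w'.length → w ≠ w' →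
    c ^ w.length ≤ opNorm ((wordProd A w : Mat2) - (wordProd A w' : Mat2))

/-- The real projective line. -/
abbrev RP1 : Type := Projectivization ℝ (Fin 2 → ℝ)

lemma cos_sin_ne_zero (θ : ℝ) : ![Real.cos θ, Real.sin θ] ≠ 0 := by
  intro h
  have h0 : Real.cos θ = 0 := by simpa using congrFun h 0
  have h1 : Real.sin θ = 0 := by simpa using congrFun h 1
  have h2 := Real.sin_sq_add_cos_sq θ
  rw [h0, h1] at h2
  norm_num at h2

/-- The point of ℝP¹ in the direction of angle `θ`. -/
def dir (θ : ℝ) : RP1 := Projectivization.mk ℝ ![Real.cos θ, Real.sin θ] (cos_sin_ne_zero θ)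

/-- The quotient topology on ℝP¹ (expressed through the angle parametrization). -/
instance : TopologicalSpace RP1 := TopologicalSpace.coinduced dir inferInstance

/-- The Borel σ-algebra on ℝP¹. -/
instance : MeasurableSpace RP1 := borel RP1

/-- The natural action of `A ∈ SL₂(ℝ)` on ℝP¹, `A·[v] = [Av]`. -/
def pact (A : SL2) : RP1 → RP1 :=
  Projectivization.map (Matrix.SpecialLinearGroup.toLin' A).toLinearMap
    (Matrix.SpecialLinearGroup.toLin' A).injective

/-- `K` is the attractor of the family `A`: the (unique) nonempty compact set with
`K = ⋃ᵢ Aᵢ·K`. -/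
def IsAttractor {ι : Type*} [Fintype ι] (A : ι → SL2) (K : Set RP1) : Prop :=
  K.Nonempty ∧ IsCompact K ∧ K = ⋃ i : ι, pact (A i) '' K

/-- `ν` is stationary for the family `A` with weights `p`: `ν = Σ_i p_i (A_i)_* ν`. -/
def IsStationary {ι : Type*} [Fintype ι] (A : ι → SL2) (p : ι → ℝ) (ν : Measure RP1) : Prop :=
  ν = ∑ i : ι, ENNReal.ofReal (p i) • Measure.map (pact (A i)) ν

/-- The `k`-th arc of the `2^{-m}` dyadic partition of ℝP¹. -/
def dyadic (m k : ℕ) : Set RP1 :=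
  dir '' Set.Ico (Real.pi * k / 2 ^ m) (Real.pi * (k + 1) / 2 ^ m)

/-- The concentric doubled arc `2I` of the `k`-th arc of the `2^{-m}` dyadic partition. -/
def dyadic2 (m k : ℕ) : Set RP1 :=
  dir '' Set.Ico (Real.pi * ((k : ℝ) - 1 / 2) / 2 ^ m) (Real.pi * ((k : ℝ) + 3 / 2) / 2 ^ m)

/-- `Σ_{I ∈ 𝒟_m} ν(I)^q`. -/
def lqSum (ν : Measure RP1) (q : ℝ) (m : ℕ) : ℝ :=
  ∑ k ∈ Finset.range (2 ^ m), ((ν (dyadic m k)).toReal) ^ q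

/-- The L^q spectrum `τ(ν,q) = liminf_m −(1/m) log₂ Σ_{I∈𝒟_m} ν(I)^q`. -/
def lqSpectrum (ν : Measure RP1) (q : ℝ) : ℝ :=
  Filter.liminf (fun m : ℕ => -(1 / (m : ℝ)) * Real.logb 2 (lqSum ν q m)) Filter.atTop

/-- `(1/n) log₂ Σ_{i ∈ Iⁿ} p_i^q ‖A_i‖^{2s}`, the `n`-th approximant of the pressure
`Ψ_q(s)`. -/
def psiAvg {ι : Type*} [Fintype ι] (A : ι → SL2) (p : ι → ℝ) (q s : ℝ) (n : ℕ) : ℝ :=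
  (1 / (n : ℝ)) * Real.logb 2
    (∑ w : Fin n → ι,
      (wordWeight p (List.ofFn w)) ^ q * (opNorm (wordProd A (List.ofFn w) : Mat2)) ^ (2 * s))

/-- `t = τ̃(q)`: `t` is the unique positive zero of the pressure function `Ψ_q`. -/
def IsPressureZero {ι : Type*} [Fintype ι] (A : ι → SL2) (p : ι → ℝ) (q t : ℝ) : Prop :=
  0 < t ∧
  Filter.Tendsto (fun n => psiAvg A p q t n) Filter.atTop (nhds 0) ∧
  ∀ s : ℝ, 0 < s → Filter.Tendsto (fun n => psiAvg A p q s n) Filter.atTop (nhds 0) → s = t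

/-- The angle metric on ℝP¹: `d([v],[w]) = arccos(|⟨v,w⟩| / (‖v‖ ‖w‖))`. -/
def pdist (x y : RP1) : ℝ :=
  Real.arccos (|x.rep 0 * y.rep 0 + x.rep 1 * y.rep 1| /
    (Real.sqrt (x.rep 0 ^ 2 + x.rep 1 ^ 2) * Real.sqrt (y.rep 0 ^ 2 + y.rep 1 ^ 2)))

/-- The open ball in ℝP¹ of radius `r` and center `x`. -/
def pball (x : RP1) (r : ℝ) : Set RP1 := {y | pdist x y < r}

instance : Fact (0 < Real.pi) := ⟨Real.pi_pos⟩

/-- The angle coordinate `Θ : ℝP¹ → ℝ/πℤ`. -/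
def theta (x : RP1) : AddCircle Real.pi :=
  ((Complex.arg ((x.rep 0 : ℂ) + (x.rep 1 : ℂ) * Complex.I) : ℝ) : AddCircle Real.pi)

/-- `w` is a `2^m` stopping word for the family `A`. -/
def IsStopping {ι : Type*} (A : ι → SL2) (m : ℕ) (w : List ι) : Prop :=
  w ≠ [] ∧
  (∀ j : ℕ, 1 ≤ j → j < w.length → opNorm (wordProd A (w.take j) : Mat2) ^ 2 < (2:ℝ) ^ m) ∧
  (2 : ℝ) ^ m ≤ opNorm (wordProd A w : Mat2) ^ 2

/-- `Σ_{i ∈ Ω_m} p_i^q`, the `L^q` sum over the `2^m` stopping words. -/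
def stopSum {ι : Type*} [Fintype ι] (A : ι → SL2) (p : ι → ℝ) (q : ℝ) (m : ℕ) : ℝ :=
  ∑' w : List ι,
    Set.indicator {w : List ι | IsStopping A m w} (fun w => (wordWeight p w) ^ q) w

/-- `Σ_{J ∈ 𝒟_{s+m}(I)} ν(J)^q` for `I` the `k`-th arc of `𝒟_s`. -/
def localSum (ν : Measure RP1) (q : ℝ) (s m k : ℕ) : ℝ :=
  ∑ j ∈ Finset.range (2 ^ (s + m)),
    Set.indicator {j : ℕ | (dyadic (s + m) j ∩ dyadic s k).Nonempty}
      (fun j => (ν (dyadic (s + m) j)).toReal ^ q) j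


lemma unit_ne_zero {u : Fin 2 → ℝ} (hu : u 0 ^ 2 + u 1 ^ 2 = 1) : u ≠ 0 := by
  intro h
  rw [h] at hu
  simp at hu

/-! ### Angles between lines -/

/-- Squared Euclidean norm of a vector of ℝ² (the norm on `Fin 2 → ℝ` is the sup norm). -/
def sq (v : Fin 2 → ℝ) : ℝ := v 0 ^ 2 + v 1 ^ 2

/-- The determinant of the matrix with columns `u` and `v`. -/
def det2 (u v : Fin 2 → ℝ) : ℝ := u 0 * v 1 - u 1 * v 0

lemma det2_sq_le (u v : Fin 2 → ℝ) : det2 u v ^ 2 ≤ sq u * sq v := by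
  unfold det2 sq
  nlinarith [sq_nonneg (u 0 * v 0 + u 1 * v 1)]

lemma exists_polar (v : Fin 2 → ℝ) (hv : v ≠ 0) :
    ∃ ρ > (0 : ℝ), ∃ θ ∈ Set.Icc (-Real.pi) Real.pi,
      v = ρ • ![Real.cos θ, Real.sin θ] ∧ Projectivization.mk ℝ v hv = dir θ := by
  set z : ℂ := ⟨v 0, v 1⟩ with hz
  have hz0 : z ≠ 0 := by
    intro h
    apply hv
    have h0 := congrArg Complex.re h
    have h1 := congrArg Complex.im h
    ext i
    fin_cases i
    · simpa [hz] using h0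
    · simpa [hz] using h1
  have hpos : 0 < ‖z‖ := norm_pos_iff.mpr hz0
  have hv' : v = ‖z‖ • ![Real.cos z.arg, Real.sin z.arg] := by
    ext i
    fin_cases i
    · simp [Complex.norm_mul_cos_arg, hz]
    · simp [Complex.norm_mul_sin_arg, hz]
  refine ⟨‖z‖, hpos, z.arg, ⟨(Complex.neg_pi_lt_arg z).le, Complex.arg_le_pi z⟩, hv', ?_⟩
  rw [dir, Projectivization.mk_eq_mk_iff']
  exact ⟨‖z‖, hv'.symm⟩

lemma continuous_dir : Continuous dir := continuous_coinduced_rng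

lemma dir_eq_of_sin_eq_zero {θ φ : ℝ} (h : Real.sin (φ - θ) = 0) : dir θ = dir φ := by
  rw [dir, dir, Projectivization.mk_eq_mk_iff']
  refine ⟨Real.cos (φ - θ), ?_⟩
  have e : θ = φ - (φ - θ) := by ring
  ext i
  fin_cases i
  · simp only [Fin.zero_eta, Pi.smul_apply, Matrix.cons_val_zero, smul_eq_mul]
    conv_rhs => rw [e, Real.cos_sub, h]
    ring
  · simp only [Fin.mk_one, Pi.smul_apply, Matrix.cons_val_one, Matrix.cons_val_fin_one,
      smul_eq_mul]
    conv_rhs => rw [e, Real.sin_sub, h]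
    ring

/-- A closed set of lines contained in an open set `U` makes an angle bounded below with the lines
outside `U`. -/
lemma exists_sep {K U : Set RP1} (hK : IsClosed K) (hU : IsOpen U) (hKU : K ⊆ U) :
    ∃ ε > (0 : ℝ), ∀ (u v : Fin 2 → ℝ) (hu : u ≠ 0) (hv : v ≠ 0),
      Projectivization.mk ℝ u hu ∈ K → Projectivization.mk ℝ v hv ∉ U →
        ε * (sq u * sq v) ≤ det2 u v ^ 2 := by
  set S : Set (ℝ × ℝ) := (Set.Icc (-Real.pi) Real.pi ∩ dir ⁻¹' K) ×ˢ
    (Set.Icc (-Real.pi) Real.pi ∩ dir ⁻¹' Uᶜ) with hS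
  have hSc : IsCompact S :=
    (isCompact_Icc.inter_right (hK.preimage continuous_dir)).prod
      (isCompact_Icc.inter_right (hU.isClosed_compl.preimage continuous_dir))
  obtain ⟨ε, hε, hmin⟩ : ∃ ε > (0 : ℝ), ∀ x ∈ S, ε ≤ Real.sin (x.2 - x.1) ^ 2 := by
    refine hSc.exists_forall_le' (f := fun x : ℝ × ℝ => Real.sin (x.2 - x.1) ^ 2)
      (by fun_prop) ?_
    rintro ⟨θ, φ⟩ ⟨⟨-, h1⟩, -, h2⟩
    have hne : Real.sin (φ - θ) ≠ 0 := fun h =>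
      h2 (hKU (by rw [← dir_eq_of_sin_eq_zero h]; exact h1))
    positivity
  refine ⟨ε, hε, fun u v hu hv huK hvU => ?_⟩
  obtain ⟨ρ, hρ, θ, hθ, rfl, hdu⟩ := exists_polar u hu
  obtain ⟨σ, hσ, φ, hφ, rfl, hdv⟩ := exists_polar v hv
  rw [hdu] at huK
  rw [hdv] at hvU
  have h := hmin (θ, φ) ⟨⟨hθ, huK⟩, hφ, hvU⟩
  have e1 : sq (ρ • ![Real.cos θ, Real.sin θ]) = ρ ^ 2 := by
    simp only [sq, Pi.smul_apply, Matrix.cons_val_zero, Matrix.cons_val_one,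
      Matrix.cons_val_fin_one, smul_eq_mul]
    linear_combination ρ ^ 2 * Real.sin_sq_add_cos_sq θ
  have e2 : sq (σ • ![Real.cos φ, Real.sin φ]) = σ ^ 2 := by
    simp only [sq, Pi.smul_apply, Matrix.cons_val_zero, Matrix.cons_val_one,
      Matrix.cons_val_fin_one, smul_eq_mul]
    linear_combination σ ^ 2 * Real.sin_sq_add_cos_sq φ
  have e3 : det2 (ρ • ![Real.cos θ, Real.sin θ]) (σ • ![Real.cos φ, Real.sin φ])
      = ρ * σ * Real.sin (φ - θ) := by
    simp only [det2, Pi.smul_apply, Matrix.cons_val_zero, Matrix.cons_val_one,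
      Matrix.cons_val_fin_one, smul_eq_mul, Real.sin_sub]
    ring
  rw [e1, e2, e3]
  have := mul_le_mul_of_nonneg_left h (by positivity : 0 ≤ ρ ^ 2 * σ ^ 2)
  simp only at this
  linarith

/-! ### The action of SL₂(ℝ) -/

lemma pact_mk (B : SL2) (v : Fin 2 → ℝ) (hv : v ≠ 0) (hBv : (B : Mat2).mulVec v ≠ 0) :
    pact B (Projectivization.mk ℝ v hv) = Projectivization.mk ℝ ((B : Mat2).mulVec v) hBv := by
  rfl

lemma exists_mulVec_eq (B : SL2) (p : Fin 2 → ℝ) : ∃ x, (B : Mat2).mulVec x = p :=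
  ⟨((B⁻¹ : SL2) : Mat2).mulVec p, by
    rw [Matrix.mulVec_mulVec, ← Matrix.SpecialLinearGroup.coe_mul, mul_inv_cancel,
      Matrix.SpecialLinearGroup.coe_one, Matrix.one_mulVec]⟩

lemma mulVec_ne_zero (B : SL2) {v : Fin 2 → ℝ} (hv : v ≠ 0) : (B : Mat2).mulVec v ≠ 0 := by
  intro h
  apply hv
  apply Matrix.eq_zero_of_mulVec_eq_zero (M := (B : Mat2)) _ h
  rw [B.det_coe]
  exact one_ne_zero

lemma det2_mulVec (B : SL2) (u v : Fin 2 → ℝ) :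
    det2 ((B : Mat2).mulVec u) ((B : Mat2).mulVec v) = det2 u v := by
  have h := B.det_coe
  rw [Matrix.det_fin_two] at h
  simp only [det2, Matrix.mulVec, dotProduct, Fin.sum_univ_two]
  linear_combination (u 0 * v 1 - u 1 * v 0) * h

lemma sq_mulVec (M : Mat2) (u : Fin 2 → ℝ) (a : ℝ)
    (h : (M.transpose * M).mulVec u = a • u) : sq (M.mulVec u) = a * sq u := by
  have h0 := congrFun h 0
  have h1 := congrFun h 1
  simp only [sq, Matrix.mulVec, dotProduct, Fin.sum_univ_two, Matrix.mul_apply,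
    Matrix.transpose_apply, Pi.smul_apply, smul_eq_mul] at h0 h1 ⊢
  linear_combination u 0 * h0 + u 1 * h1

lemma pact_wordProd_mem {ι : Type} (A : ι → SL2) (U : Set RP1)
    (hmap : ∀ i : ι, pact (A i) '' closure U ⊆ U) (w : List ι) (x : RP1) (hx : x ∈ U) :
    pact (wordProd A w) x ∈ U := by
  induction w with
  | nil =>
    induction x using Projectivization.ind with
    | h v hv =>
      rw [pact_mk _ _ hv (mulVec_ne_zero _ hv)]
      simpa [wordProd] using hx
  | cons i w ih =>
    have e : pact (wordProd A (i :: w)) x = pact (A i) (pact (wordProd A w) x) := by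
      induction x using Projectivization.ind with
      | h v hv =>
        rw [pact_mk _ _ hv (mulVec_ne_zero _ hv), pact_mk _ _ hv (mulVec_ne_zero _ hv),
          pact_mk _ _ _ (mulVec_ne_zero _ (mulVec_ne_zero _ hv))]
        congr 1
        simp only [wordProd, List.map_cons, List.prod_cons, Matrix.SpecialLinearGroup.coe_mul,
          Matrix.mulVec_mulVec]
    rw [e]
    exact hmap i ⟨_, subset_closure ih, rfl⟩

/-! ### Lines outside the invariant open set -/

/-- Two independent lines lie outside a proper set `U` with `B · closure U ⊆ U`: the preimage under
`B` of a line outside `U` lies in the open complement of `closure U`, which therefore contains an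
arc. -/
lemma exists_pair (B : SL2) (U : Set RP1) (hne : U ≠ Set.univ)
    (hmap : pact B '' closure U ⊆ U) :
    ∃ θ φ : ℝ, dir θ ∉ U ∧ dir φ ∉ U ∧ 0 < Real.sin (φ - θ) := by
  obtain ⟨z, hz⟩ := (Set.ne_univ_iff_exists_notMem U).mp hne
  obtain ⟨θ, hθ⟩ : ∃ θ, dir θ ∉ closure U := by
    induction z using Projectivization.ind with
    | h p hp =>
      obtain ⟨x, rfl⟩ := exists_mulVec_eq B p
      have hx : x ≠ 0 := by
        rintro rfl
        exact hp (Matrix.mulVec_zero _)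
      obtain ⟨-, -, θ, -, -, h⟩ := exists_polar x hx
      refine ⟨θ, fun hc => hz (hmap ⟨_, hc, ?_⟩)⟩
      rw [← h, pact_mk B x hx hp]
  have hopen : IsOpen (dir ⁻¹' (closure U)ᶜ) :=
    isClosed_closure.isOpen_compl.preimage continuous_dir
  obtain ⟨δ, hδ, hball⟩ := Metric.isOpen_iff.mp hopen θ hθ
  -- Halving `min δ π` keeps the second angle in the ball and less than `π` away from `θ`.
  have hm : 0 < min δ Real.pi := lt_min hδ Real.pi_pos
  have h1 := min_le_left δ Real.pi
  have h2 := min_le_right δ Real.pi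
  refine ⟨θ, θ + min δ Real.pi / 2, fun h => hθ (subset_closure h), fun h => ?_, ?_⟩
  · refine hball (a := θ + min δ Real.pi / 2) ?_ (subset_closure h)
    rw [Metric.mem_ball, Real.dist_eq, add_sub_cancel_left, abs_of_pos (by linarith)]
    linarith
  · rw [add_sub_cancel_left]
    exact Real.sin_pos_of_pos_of_lt_pi (by linarith) (by linarith)

/-- contracting singular directions of long words avoid U₁. -/
theorem statement19 {ι : Type} [Fintype ι] (A : ι → SL2)
    (hUH : UniformlyHyperbolic A)
    (U₁ U₀ : Set RP1) (hU₁ : IsOpen U₁) (hU₀ : IsOpen U₀)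
    (hcl : closure U₁ ⊆ U₀) (hne : U₀ ≠ Set.univ)
    (hmap : ∀ i : ι, pact (A i) '' closure U₀ ⊆ U₀) :
    ∃ n₀ : ℕ, ∀ w : List ι, n₀ ≤ w.length →
      ∀ u : Fin 2 → ℝ, ∀ hu : u 0 ^ 2 + u 1 ^ 2 = 1,
        ((wordProd A w : Mat2).transpose * (wordProd A w : Mat2)).mulVec u
            = (opNorm (wordProd A w : Mat2) ^ 2)⁻¹ • u →
        Projectivization.mk ℝ u (unit_ne_zero hu) ∉ U₁ := by
  rcases isEmpty_or_nonempty ι with hι | ⟨⟨i₀⟩⟩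
  · refine ⟨1, fun w hw => ?_⟩
    cases w with
    | nil => simp at hw
    | cons i w => exact hι.elim i
  obtain ⟨c, hc, r, hr, hgrow⟩ := hUH
  obtain ⟨θ, φ, hθ, hφ, hd⟩ := exists_pair (A i₀) U₀ hne (hmap i₀)
  obtain ⟨ε, hε, hsep⟩ := exists_sep isClosed_closure hU₀ hcl
  set d := Real.sin (φ - θ) with hd_def
  have htend : Tendsto (fun n : ℕ => ε * d * (c * r ^ n) ^ 2) atTop atTop := by
    have h1 : Tendsto (fun n : ℕ => c * r ^ n) atTop atTop :=
      (tendsto_pow_atTop_atTop_of_one_lt hr).const_mul_atTop hc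
    exact ((tendsto_pow_atTop two_ne_zero).comp h1).const_mul_atTop (mul_pos hε hd)
  obtain ⟨N, hN⟩ := eventually_atTop.mp (htend.eventually_gt_atTop 1)
  refine ⟨N + 1, fun w hw u hu heig hmem => ?_⟩
  have hwne : w ≠ [] := by
    rintro rfl
    simp at hw
  have hbig := hN w.length (by omega)
  have hle := hgrow w hwne
  set B := wordProd A w with hB
  set M := opNorm (B : Mat2) with hM
  have hcr : 0 < c * r ^ w.length := by positivity
  have hMpos : 0 < M := hcr.trans_le hle
  have hM1 : 1 < ε * d * M ^ 2 := by
    refine hbig.trans_le ?_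
    gcongr
  have hBu : sq ((B : Mat2).mulVec u) = (M ^ 2)⁻¹ := by
    rw [sq_mulVec _ _ _ heig, show sq u = 1 from hu, mul_one]
  -- A preimage under `B` of a unit vector spanning a line outside `U₀` must be short.
  have key : ∀ α : ℝ, dir α ∉ U₀ → ∀ x : Fin 2 → ℝ,
      (B : Mat2).mulVec x = ![Real.cos α, Real.sin α] → ε * sq x ≤ (M ^ 2)⁻¹ := by
    intro α hα x hx
    have hx0 : x ≠ 0 := by
      rintro rfl
      rw [Matrix.mulVec_zero] at hx
      exact cos_sin_ne_zero α hx.symm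
    have hxU : Projectivization.mk ℝ x hx0 ∉ U₀ := by
      intro h
      have h' := pact_wordProd_mem A U₀ hmap w _ h
      rw [pact_mk _ _ hx0 (mulVec_ne_zero _ hx0)] at h'
      apply hα
      simpa only [dir, ← hB, hx] using h'
    have h1 := hsep u x (unit_ne_zero hu) hx0 (subset_closure hmem) hxU
    have h2 := det2_sq_le ((B : Mat2).mulVec u) ((B : Mat2).mulVec x)
    rw [det2_mulVec, hBu, hx,
      show sq ![Real.cos α, Real.sin α] = 1 by simp [sq], mul_one] at h2
    rw [show sq u = 1 from hu, one_mul] at h1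
    exact h1.trans h2
  obtain ⟨x, hx⟩ := exists_mulVec_eq B ![Real.cos θ, Real.sin θ]
  obtain ⟨y, hy⟩ := exists_mulVec_eq B ![Real.cos φ, Real.sin φ]
  have hxs := key θ hθ x hx
  have hys := key φ hφ y hy
  have hdet : det2 x y = d := by
    rw [← det2_mulVec B, hx, hy, hd_def, Real.sin_sub]
    simp only [det2, Matrix.cons_val_zero, Matrix.cons_val_one, Matrix.cons_val_fin_one]
    ring
  have hxy := det2_sq_le x y
  rw [hdet] at hxy
  have hsy : 0 ≤ ε * sq y := by unfold sq; positivity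
  have hprod : (ε * d) ^ 2 ≤ ((M ^ 2)⁻¹) ^ 2 := by
    calc (ε * d) ^ 2 = ε ^ 2 * d ^ 2 := by ring
      _ ≤ ε ^ 2 * (sq x * sq y) := by gcongr
      _ = (ε * sq x) * (ε * sq y) := by ring
      _ ≤ (M ^ 2)⁻¹ * (M ^ 2)⁻¹ := mul_le_mul hxs hys hsy (by positivity)
      _ = ((M ^ 2)⁻¹) ^ 2 := by ring
  have h3 : ε * d ≤ (M ^ 2)⁻¹ := (pow_le_pow_iff_left₀ (by positivity) (by positivity) two_ne_zero).mp hprod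
  have h4 : ε * d * M ^ 2 ≤ (M ^ 2)⁻¹ * M ^ 2 := by gcongr
  rw [inv_mul_cancel₀ (by positivity)] at h4
  linarith

end

end Paper
end
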